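/- Let R = ℚ[a,b]/⟨a^{m+1}, b^{m+1}, Σ_{i+j=m} a^i b^j⟩ with the ℤ/2-action swapping a and b. Then as a graded vector space R has basis {a^i b^j : 0 ≤ i ≤ m, 0 ≤ j ≤ m-1}, the invariant subspace R^+ has basis {a^i b^j + a^j b^i : 0 ≤ i ≤ j ≤ m-1}, and the Poincaré series satisfies P_R(z) = (1+z^2) P_{R^+}(z), where a and b have degree 2. -/

import Mathlib

open MvPolynomial in
/-- The defining ideal of `R = ℚ[a,b]/⟨a^(m+1), b^(m+1), Σ_{i+j=m} a^i b^j⟩`. -/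
noncomputable def stmt3Ideal (m : ℕ) : Ideal (MvPolynomial (Fin 2) ℚ) :=
  Ideal.span {(X 0 : MvPolynomial (Fin 2) ℚ) ^ (m + 1), (X 1 : MvPolynomial (Fin 2) ℚ) ^ (m + 1),
    ∑ i ∈ Finset.range (m + 1), (X 0 : MvPolynomial (Fin 2) ℚ) ^ i * X 1 ^ (m - i)}

/-- The ring `R = ℚ[a,b]/⟨a^(m+1), b^(m+1), Σ_{i+j=m} a^i b^j⟩`. -/
noncomputable abbrev stmt3R (m : ℕ) := MvPolynomial (Fin 2) ℚ ⧸ stmt3Ideal m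

/-- The class `a` of the first variable in `R`. -/
noncomputable def stmt3a (m : ℕ) : stmt3R m := Ideal.Quotient.mk _ (MvPolynomial.X 0)

/-- The class `b` of the second variable in `R`. -/
noncomputable def stmt3b (m : ℕ) : stmt3R m := Ideal.Quotient.mk _ (MvPolynomial.X 1)

/-- The degree-`d` graded piece of `R` (in the polynomial grading where `a, b` have
degree `1`; cohomologically `a, b` have degree `2`, so this is cohomological degree `2d`). -/
noncomputable def stmt3Grade (m d : ℕ) : Submodule ℚ (stmt3R m) :=
  Submodule.map (Ideal.Quotient.mkₐ ℚ (stmt3Ideal m)).toLinearMap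
    (MvPolynomial.homogeneousSubmodule (Fin 2) ℚ d)

open Polynomial in
/-- Monic polynomial of degree m in the model. -/
lemma stmt3_aux_monic {A : Type*} [CommRing A] [Nontrivial A] (α : A) (m : ℕ) (hm : 0 < m) :
    (∑ i ∈ Finset.range (m + 1), C (α ^ i) * X ^ (m - i) : A[X]).Monic ∧
    (∑ i ∈ Finset.range (m + 1), C (α ^ i) * X ^ (m - i) : A[X]).natDegree = m := by
  have hdeg : (∑ i ∈ Finset.range m, C (α ^ (i+1)) * X ^ (m - (i+1)) : A[X]).degree < (m : ℕ) := by
    refine lt_of_le_of_lt (degree_sum_le _ _) ?_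
    refine (Finset.sup_lt_iff (WithBot.bot_lt_coe m)).2 ?_
    intro i hi
    refine lt_of_le_of_lt (degree_C_mul_X_pow_le _ _) ?_
    have := Finset.mem_range.1 hi
    exact WithBot.coe_lt_coe.2 (by omega : m - (i+1) < m)
  rw [Finset.sum_range_succ']
  simp only [pow_zero, map_one, one_mul, Nat.sub_zero]
  rw [add_comm]
  refine ⟨monic_X_pow_add hdeg, ?_⟩
  rw [natDegree_eq_of_degree_eq_some]
  rw [degree_add_eq_left_of_degree_lt (by rwa [degree_X_pow]), degree_X_pow]

lemma stmt3_linInd (m : ℕ) (hm : 0 < m) :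
    LinearIndependent ℚ (fun p : {p : ℕ × ℕ // p.1 ≤ m ∧ p.2 < m} =>
        stmt3a m ^ p.1.1 * stmt3b m ^ p.1.2) := by
  let f : Polynomial ℚ := Polynomial.X ^ (m+1)
  have hf : f.Monic := Polynomial.monic_X_pow _
  have hfd : f.natDegree = m + 1 := Polynomial.natDegree_X_pow _
  let A := AdjoinRoot f
  have : Nontrivial A := AdjoinRoot.nontrivial f (by
    rw [Polynomial.degree_X_pow]; exact_mod_cast (Nat.succ_ne_zero m))
  let α : A := AdjoinRoot.root f
  have hα : α ^ (m+1) = 0 := by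
    have := AdjoinRoot.eval₂_root f
    simpa [f] using this
  let h : Polynomial A := ∑ i ∈ Finset.range (m + 1),
    Polynomial.C (α ^ i) * Polynomial.X ^ (m - i)
  obtain ⟨hh, hhd⟩ : h.Monic ∧ h.natDegree = m := stmt3_aux_monic α m hm
  let B := AdjoinRoot h
  let β : B := AdjoinRoot.root h
  let α' : B := algebraMap A B α
  have hβ : ∑ i ∈ Finset.range (m + 1), α' ^ i * β ^ (m - i) = 0 := by
    have := AdjoinRoot.eval₂_root h
    simp only [h, Polynomial.eval₂_finsetSum, Polynomial.eval₂_mul, Polynomial.eval₂_C,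
      Polynomial.eval₂_pow, Polynomial.eval₂_X, map_pow] at this
    exact this
  have hα' : α' ^ (m+1) = 0 := by rw [← map_pow, hα, map_zero]
  have hβ' : β ^ (m+1) = 0 := by
    have := geom_sum₂_mul α' β (m+1)
    simp only [Nat.add_sub_cancel] at this
    rw [hβ, hα'] at this
    simpa using this
  let φ : MvPolynomial (Fin 2) ℚ →ₐ[ℚ] B := MvPolynomial.aeval ![α', β]
  have hφ : ∀ x ∈ stmt3Ideal m, φ x = 0 := by
    intro x hx
    have : stmt3Ideal m ≤ RingHom.ker φ := by
      rw [stmt3Ideal, Ideal.span_le]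
      rintro y (rfl | rfl | rfl)
      · simp [φ, hα']
      · simp [φ, hβ']
      · simpa [φ, map_sum] using hβ
    exact this hx
  let ψ : stmt3R m →ₐ[ℚ] B := Ideal.Quotient.liftₐ (stmt3Ideal m) φ hφ
  have hψa : ψ (stmt3a m) = α' := by
    have : ψ (stmt3a m) = φ (MvPolynomial.X 0) := rfl
    rw [this]; simp [φ]
  have hψb : ψ (stmt3b m) = β := by
    have : ψ (stmt3b m) = φ (MvPolynomial.X 1) := rfl
    rw [this]; simp [φ]
  apply LinearIndependent.of_comp ψ.toLinearMap
  let b1 := (AdjoinRoot.powerBasis' hf).basis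
  let b2 := (AdjoinRoot.powerBasis' hh).basis
  have hd1 : (AdjoinRoot.powerBasis' hf).dim = m + 1 := by
    rw [AdjoinRoot.powerBasis'_dim, hfd]
  have hd2 : (AdjoinRoot.powerBasis' hh).dim = m := by
    rw [AdjoinRoot.powerBasis'_dim, hhd]
  let e : {p : ℕ × ℕ // p.1 ≤ m ∧ p.2 < m} →
      Fin (AdjoinRoot.powerBasis' hf).dim × Fin (AdjoinRoot.powerBasis' hh).dim :=
    fun p => (⟨p.1.1, by rw [hd1]; have := p.2.1; omega⟩, ⟨p.1.2, by rw [hd2]; exact p.2.2⟩)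
  have he : Function.Injective e := by
    rintro ⟨⟨i, j⟩, hp⟩ ⟨⟨k, l⟩, hq⟩ hpq
    simp only [e, Prod.mk.injEq, Fin.mk.injEq] at hpq
    simp [hpq.1, hpq.2]
  have key := ((b1.smulTower b2).linearIndependent).comp e he
  convert key using 1
  funext p
  simp only [Function.comp, AlgHom.toLinearMap_apply, map_mul, map_pow, hψa, hψb,
    Module.Basis.smulTower_apply, b1, b2, PowerBasis.coe_basis, e, Algebra.smul_def]
  rfl

lemma stmt3_rel_a (m : ℕ) : stmt3a m ^ (m+1) = 0 := by
  rw [stmt3a, ← map_pow]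
  exact Ideal.Quotient.eq_zero_iff_mem.2 (Ideal.subset_span (by simp))

lemma stmt3_rel_h (m : ℕ) :
    ∑ i ∈ Finset.range (m + 1), stmt3a m ^ i * stmt3b m ^ (m - i) = 0 := by
  have : ∑ i ∈ Finset.range (m + 1), stmt3a m ^ i * stmt3b m ^ (m - i) =
    Ideal.Quotient.mk (stmt3Ideal m) (∑ i ∈ Finset.range (m + 1),
      (MvPolynomial.X 0 : MvPolynomial (Fin 2) ℚ) ^ i * MvPolynomial.X 1 ^ (m - i)) := by
    simp [stmt3a, stmt3b]
  rw [this]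
  exact Ideal.Quotient.eq_zero_iff_mem.2 (Ideal.subset_span (by simp))

lemma stmt3_a_zero (m i : ℕ) (h : m < i) : stmt3a m ^ i = 0 :=
  pow_eq_zero_of_le h (stmt3_rel_a m)

/-- span of the basis monomials with degree in `T` -/
noncomputable def stmt3V (m : ℕ) (T : Set ℕ) : Submodule ℚ (stmt3R m) :=
  Submodule.span ℚ ((fun p : ℕ × ℕ => stmt3a m ^ p.1 * stmt3b m ^ p.2) ''
    {p | p.1 ≤ m ∧ p.2 < m ∧ p.1 + p.2 ∈ T})

/-- span of symmetric elements with degree in `T` -/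
noncomputable def stmt3S (m : ℕ) (T : Set ℕ) : Submodule ℚ (stmt3R m) :=
  Submodule.span ℚ ((fun p : ℕ × ℕ =>
      stmt3a m ^ p.1 * stmt3b m ^ p.2 + stmt3a m ^ p.2 * stmt3b m ^ p.1) ''
    {p | p.1 ≤ p.2 ∧ p.2 < m ∧ p.1 + p.2 ∈ T})

lemma stmt3_mem_V (m : ℕ) (T : Set ℕ) (j : ℕ) : ∀ i, i + j ∈ T →
    stmt3a m ^ i * stmt3b m ^ j ∈ stmt3V m T := by
  induction j using Nat.strong_induction_on with
  | _ j ih =>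
    intro i hT
    rcases lt_or_ge m i with hi | hi
    · rw [stmt3_a_zero m i hi, zero_mul]; exact zero_mem _
    rcases lt_or_ge j m with hj | hj
    · exact Submodule.subset_span ⟨(i, j), ⟨hi, hj, hT⟩, rfl⟩
    have h := stmt3_rel_h m
    rw [Finset.sum_range_succ'] at h
    have h2 : stmt3a m ^ i * stmt3b m ^ j =
        - ∑ k ∈ Finset.range m, stmt3a m ^ (i + (k+1)) * stmt3b m ^ (j - (k+1)) := by
      have hb : stmt3b m ^ m =
          - ∑ k ∈ Finset.range m, stmt3a m ^ (k+1) * stmt3b m ^ (m - (k+1)) := by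
        rw [eq_neg_iff_add_eq_zero, add_comm]; simpa using h
      rw [show j = (j - m) + m by omega, pow_add, hb]
      have hneg : ∀ x y z : stmt3R m, x * (y * -z) = -(x * (y * z)) := by intros; ring
      rw [hneg, Finset.mul_sum, Finset.mul_sum]
      congr 1
      refine Finset.sum_congr rfl fun k hk => ?_
      have := Finset.mem_range.1 hk
      rw [show j - m + m - (k+1) = (j - m) + (m - (k+1)) by omega, pow_add, pow_add]
      ring
    rw [h2]
    refine neg_mem (sum_mem fun k hk => ?_)
    have := Finset.mem_range.1 hk
    exact ih _ (by omega) _ (by rwa [show i + (k+1) + (j - (k+1)) = i + j by omega])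

lemma stmt3_mk_monomial (m : ℕ) (s : Fin 2 →₀ ℕ) (c : ℚ) :
    Ideal.Quotient.mkₐ ℚ (stmt3Ideal m) (MvPolynomial.monomial s c) =
      c • (stmt3a m ^ (s 0) * stmt3b m ^ (s 1)) := by
  have : (MvPolynomial.monomial s c : MvPolynomial (Fin 2) ℚ) =
      c • (MvPolynomial.X 0 ^ (s 0) * MvPolynomial.X 1 ^ (s 1)) := by
    rw [MvPolynomial.monomial_eq, Finsupp.prod_fintype _ _ (by simp), Fin.prod_univ_two,
      MvPolynomial.smul_eq_C_mul]
  rw [this, map_smul, map_mul, map_pow, map_pow]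
  rfl

lemma stmt3_V_univ (m : ℕ) : stmt3V m Set.univ = ⊤ := by
  rw [eq_top_iff]
  rintro x -
  obtain ⟨x, rfl⟩ := Ideal.Quotient.mkₐ_surjective ℚ (stmt3Ideal m) x
  rw [x.as_sum, map_sum]
  refine sum_mem fun s _ => ?_
  rw [stmt3_mk_monomial]
  exact Submodule.smul_mem _ _ (stmt3_mem_V m _ _ _ trivial)

lemma stmt3_V_grade (m d : ℕ) : stmt3V m {d} = stmt3Grade m d := by
  apply le_antisymm
  · rw [stmt3V, Submodule.span_le]
    rintro _ ⟨⟨i, j⟩, ⟨-, -, h⟩, rfl⟩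
    refine ⟨MvPolynomial.X 0 ^ i * MvPolynomial.X 1 ^ j, ?_, ?_⟩
    · have h' : i + j = d := h
      have := ((MvPolynomial.isHomogeneous_X ℚ (0 : Fin 2)).pow i).mul
        ((MvPolynomial.isHomogeneous_X ℚ (1 : Fin 2)).pow j)
      simp only [one_mul, h'] at this
      exact this
    · simp only [AlgHom.toLinearMap_apply, map_mul, map_pow]; rfl
  · rintro _ ⟨x, hx, rfl⟩
    have hx : x.IsHomogeneous d := hx
    rw [AlgHom.toLinearMap_apply, x.as_sum, map_sum]
    refine sum_mem fun s hs => ?_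
    rw [stmt3_mk_monomial]
    refine Submodule.smul_mem _ _ (stmt3_mem_V m _ _ _ ?_)
    have := hx (MvPolynomial.mem_support_iff.1 hs)
    rw [Finsupp.weight_apply, Finsupp.sum_fintype _ _ (by simp), Fin.sum_univ_two] at this
    simpa using this

lemma stmt3_sym_lt (m : ℕ) (T : Set ℕ) (i j : ℕ) (hi : i < m) (hj : j < m) (hT : i + j ∈ T) :
    stmt3a m ^ i * stmt3b m ^ j + stmt3a m ^ j * stmt3b m ^ i ∈ stmt3S m T := by
  rcases le_total i j with h | h
  · exact Submodule.subset_span ⟨(i, j), ⟨h, hj, hT⟩, rfl⟩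
  · rw [add_comm]
    exact Submodule.subset_span ⟨(j, i), ⟨h, hi, by rwa [add_comm] at hT⟩, rfl⟩

lemma stmt3_sym_m (m : ℕ) (T : Set ℕ) (j : ℕ) (hj : j < m) (hT : m + j ∈ T) :
    stmt3a m ^ m * stmt3b m ^ j + stmt3a m ^ j * stmt3b m ^ m ∈ stmt3S m T := by
  obtain ⟨n, rfl⟩ : ∃ n, m = j + (n + 1) := ⟨m - j - 1, by omega⟩
  set m := j + (n+1) with hmdef
  -- `a^j h_m`
  have h : ∑ k ∈ Finset.range (n + 2), stmt3a m ^ (j + k) * stmt3b m ^ (m - k) = 0 := by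
    have h0 := congrArg (fun x => stmt3a m ^ j * x) (stmt3_rel_h m)
    simp only [mul_zero, Finset.mul_sum] at h0
    rw [← h0]
    have hsub : Finset.range (n + 2) ⊆ Finset.range (m + 1) := by
      intro x hx; simp only [Finset.mem_range] at *; omega
    rw [← Finset.sum_subset hsub]
    · refine Finset.sum_congr rfl fun k _ => ?_
      rw [pow_add, mul_assoc]
    · intro k _ hk
      rw [← mul_assoc, ← pow_add, stmt3_a_zero, zero_mul]
      simp only [Finset.mem_range] at hk; omega
  rw [Finset.sum_range_succ, Finset.sum_range_succ'] at h
  have e1 : m - (n + 1) = j := by omega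
  rw [e1, ← hmdef, Nat.sub_zero, Nat.add_zero] at h
  set W := ∑ k ∈ Finset.range n, stmt3a m ^ (j + (k+1)) * stmt3b m ^ (m - (k+1)) with hW
  have hW' : W = ∑ k ∈ Finset.range n, stmt3a m ^ (m - (k+1)) * stmt3b m ^ (j + (k+1)) := by
    rw [hW, ← Finset.sum_range_reflect]
    refine Finset.sum_congr rfl fun k hk => ?_
    have := Finset.mem_range.1 hk
    congr 2 <;> omega
  have h3 : stmt3a m ^ m * stmt3b m ^ j + stmt3a m ^ j * stmt3b m ^ m =
      (-(1/2) : ℚ) • ∑ k ∈ Finset.range n, (stmt3a m ^ (j + (k+1)) * stmt3b m ^ (m - (k+1)) +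
        stmt3a m ^ (m - (k+1)) * stmt3b m ^ (j + (k+1))) := by
    rw [Finset.sum_add_distrib, ← hW, ← hW']
    have : stmt3a m ^ m * stmt3b m ^ j + stmt3a m ^ j * stmt3b m ^ m = -W := by
      linear_combination h
    rw [this]
    module
  rw [h3]
  refine Submodule.smul_mem _ _ (sum_mem fun k hk => ?_)
  have := Finset.mem_range.1 hk
  refine stmt3_sym_lt m T _ _ (by omega) (by omega) ?_
  rwa [show j + (k+1) + (m - (k+1)) = m + j by omega]

lemma stmt3_S_eq (m : ℕ) (T : Set ℕ) (σ : stmt3R m ≃ₐ[ℚ] stmt3R m)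
    (hσa : σ (stmt3a m) = stmt3b m) (hσb : σ (stmt3b m) = stmt3a m) :
    stmt3S m T = stmt3V m T ⊓ LinearMap.ker (σ.toLinearMap - LinearMap.id) := by
  apply le_antisymm
  · rw [stmt3S, Submodule.span_le]
    rintro _ ⟨⟨i, j⟩, ⟨h1, h2, h3⟩, rfl⟩
    refine ⟨add_mem (stmt3_mem_V m T _ _ h3) (stmt3_mem_V m T _ _ (by rwa [add_comm] at h3)), ?_⟩
    simp only [SetLike.mem_coe, LinearMap.mem_ker, LinearMap.sub_apply, LinearMap.id_apply,
      AlgEquiv.toLinearMap_apply, map_add, map_mul, map_pow, hσa, hσb]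
    ring
  · rintro x ⟨hx, hx2⟩
    have key : ∀ y ∈ stmt3V m T, y + σ y ∈ stmt3S m T := by
      intro y hy
      have : stmt3V m T ≤ (stmt3S m T).comap (LinearMap.id + σ.toLinearMap) := by
        rw [stmt3V, Submodule.span_le]
        rintro _ ⟨⟨i, j⟩, ⟨h1, h2, h3⟩, rfl⟩
        simp only [SetLike.mem_coe, Submodule.mem_comap, LinearMap.add_apply, LinearMap.id_apply,
          AlgEquiv.toLinearMap_apply, map_mul, map_pow, hσa, hσb]
        rw [mul_comm (stmt3b m ^ i)]
        dsimp only at h1 h2 h3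
        rcases lt_or_eq_of_le h1 with h | rfl
        · exact stmt3_sym_lt m T i j h h2 h3
        · exact stmt3_sym_m i T j h2 h3
      exact this hy
    have hσx : σ x = x := by
      simpa [sub_eq_zero] using hx2
    have h := key x hx
    rw [hσx] at h
    have : x = (1/2 : ℚ) • (x + x) := by module
    rw [this]
    exact Submodule.smul_mem _ _ h

lemma stmt3_linInd_sym (m : ℕ) (hm : 0 < m) :
    LinearIndependent ℚ (fun p : {p : ℕ × ℕ // p.1 ≤ p.2 ∧ p.2 < m} =>
        stmt3a m ^ p.1.1 * stmt3b m ^ p.1.2 + stmt3a m ^ p.1.2 * stmt3b m ^ p.1.1) := by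
  have hL := stmt3_linInd m hm
  have hspan : ⊤ ≤ Submodule.span ℚ (Set.range fun p : {p : ℕ × ℕ // p.1 ≤ m ∧ p.2 < m} =>
        stmt3a m ^ p.1.1 * stmt3b m ^ p.1.2) := by
    rw [← stmt3_V_univ m, stmt3V]
    apply Submodule.span_mono
    rintro _ ⟨p, hp, rfl⟩
    exact ⟨⟨p, hp.1, hp.2.1⟩, rfl⟩
  let B := Module.Basis.mk hL hspan
  have hB : ∀ i j (hi : i ≤ m) (hj : j < m), stmt3a m ^ i * stmt3b m ^ j =
      B ⟨(i, j), hi, hj⟩ := by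
    intro i j hi hj
    simp [B]
  rw [linearIndependent_iff']
  rintro s g hg ⟨⟨i, j⟩, hij, hj⟩ hp
  dsimp only at hij hj
  have h := congrArg (B.coord ⟨(i, j), by dsimp only; omega, hj⟩) hg
  rw [map_sum, map_zero, Finset.sum_eq_single ⟨(i, j), hij, hj⟩] at h
  · rw [map_smul, hB i j (by omega) hj, hB j i (by omega) (by omega), map_add, smul_eq_mul] at h
    simp only [Module.Basis.coord_apply, Module.Basis.repr_self, Finsupp.single_apply] at h
    rcases mul_eq_zero.1 h with h | h
    · exact h
    · exfalso
      split_ifs at h <;> norm_num at h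
  · rintro ⟨⟨k, l⟩, hkl, hl⟩ - hne
    dsimp only at hkl hl
    rw [map_smul, hB k l (by omega) hl, hB l k (by omega) (by omega), map_add]
    simp only [Module.Basis.coord_apply, Module.Basis.repr_self]
    rw [Finsupp.single_eq_of_ne, Finsupp.single_eq_of_ne]
    · simp
    · intro h
      simp only [Subtype.mk.injEq, Prod.mk.injEq] at h
      apply hne
      simp only [Subtype.mk.injEq, Prod.mk.injEq]
      omega
    · intro h
      simp only [Subtype.mk.injEq, Prod.mk.injEq] at h
      apply hne
      simp only [Subtype.mk.injEq, Prod.mk.injEq]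
      omega
  · intro h; exact absurd hp h

/-- exponents of the basis of R in degree d -/
def stmt3F (m d : ℕ) : Finset (ℕ × ℕ) :=
  (Finset.range (m+1) ×ˢ Finset.range m).filter fun p => p.1 + p.2 = d

/-- exponents of the basis of R^+ in degree d -/
def stmt3G (m d : ℕ) : Finset (ℕ × ℕ) :=
  (Finset.range (m+1) ×ˢ Finset.range m).filter fun p => p.1 ≤ p.2 ∧ p.1 + p.2 = d

lemma stmt3_finrank_V (m : ℕ) (hm : 0 < m) (d : ℕ) :
    Module.finrank ℚ ↥(stmt3V m {d}) = (stmt3F m d).card := by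
  have hF : ∀ p ∈ stmt3F m d, p.1 ≤ m ∧ p.2 < m := by
    intro p hp
    simp only [stmt3F, Finset.mem_filter, Finset.mem_product, Finset.mem_range] at hp
    omega
  have hL := (stmt3_linInd m hm).comp
    (fun p : stmt3F m d => (⟨p.1, hF p.1 p.2⟩ : {p : ℕ × ℕ // p.1 ≤ m ∧ p.2 < m}))
    (by intro p q h; exact Subtype.ext (congrArg (fun z => z.1) h))
  rw [← Fintype.card_coe, ← finrank_span_eq_card hL, stmt3V]
  refine congrArg (fun s : Set (stmt3R m) => Module.finrank ℚ ↥(Submodule.span ℚ s)) ?_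
  ext x
  constructor
  · rintro ⟨p, ⟨h1, h2, h3⟩, rfl⟩
    refine ⟨⟨p, ?_⟩, rfl⟩
    simp only [stmt3F, Finset.mem_filter, Finset.mem_product, Finset.mem_range]
    exact ⟨⟨by omega, h2⟩, h3⟩
  · rintro ⟨⟨p, hp⟩, rfl⟩
    refine ⟨p, ⟨(hF p hp).1, (hF p hp).2, ?_⟩, rfl⟩
    exact (Finset.mem_filter.1 hp).2

lemma stmt3_finrank_S (m : ℕ) (hm : 0 < m) (d : ℕ) :
    Module.finrank ℚ ↥(stmt3S m {d}) = (stmt3G m d).card := by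
  have hF : ∀ p ∈ stmt3G m d, p.1 ≤ p.2 ∧ p.2 < m := by
    intro p hp
    simp only [stmt3G, Finset.mem_filter, Finset.mem_product, Finset.mem_range] at hp
    omega
  have hL := (stmt3_linInd_sym m hm).comp
    (fun p : stmt3G m d => (⟨p.1, hF p.1 p.2⟩ : {p : ℕ × ℕ // p.1 ≤ p.2 ∧ p.2 < m}))
    (by intro p q h; exact Subtype.ext (congrArg (fun z => z.1) h))
  rw [← Fintype.card_coe, ← finrank_span_eq_card hL, stmt3S]
  refine congrArg (fun s : Set (stmt3R m) => Module.finrank ℚ ↥(Submodule.span ℚ s)) ?_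
  ext x
  constructor
  · rintro ⟨p, ⟨h1, h2, h3⟩, rfl⟩
    refine ⟨⟨p, ?_⟩, rfl⟩
    simp only [stmt3G, Finset.mem_filter, Finset.mem_product, Finset.mem_range]
    exact ⟨⟨by omega, h2⟩, h1, h3⟩
  · rintro ⟨⟨p, hp⟩, rfl⟩
    refine ⟨p, ⟨(hF p hp).1, (hF p hp).2, ?_⟩, rfl⟩
    exact (Finset.mem_filter.1 hp).2.2

lemma stmt3_card_zero (m : ℕ) : (stmt3F m 0).card = (stmt3G m 0).card := by
  congr 1
  ext ⟨i, j⟩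
  simp only [stmt3F, stmt3G, Finset.mem_filter, Finset.mem_product, Finset.mem_range]
  omega

lemma stmt3_card_succ (m d : ℕ) :
    (stmt3F m (d+1)).card = (stmt3G m (d+1)).card + (stmt3G m d).card := by
  have hinj : Function.Injective (fun p : ℕ × ℕ => (p.2 + 1, p.1)) := by
    rintro ⟨i, j⟩ ⟨k, l⟩ h
    simp only [Prod.mk.injEq] at h ⊢
    omega
  rw [← Finset.card_image_of_injective (stmt3G m d) hinj, ← Finset.card_union_of_disjoint]
  · congr 1
    ext ⟨i, j⟩
    simp only [stmt3F, stmt3G, Finset.mem_filter, Finset.mem_product, Finset.mem_range,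
      Finset.mem_union, Finset.mem_image, Prod.exists, Prod.mk.injEq]
    constructor
    · intro h
      rcases le_or_gt i j with hij | hij
      · left; omega
      · right; exact ⟨j, i - 1, by omega, by omega, rfl⟩
    · rintro (h | ⟨k, l, h, h1, h2⟩) <;> omega
  · rw [Finset.disjoint_left]
    rintro ⟨i, j⟩ h1 h2
    simp only [stmt3G, Finset.mem_filter, Finset.mem_product, Finset.mem_range,
      Finset.mem_image, Prod.exists, Prod.mk.injEq] at h1 h2
    obtain ⟨k, l, h, h3, h4⟩ := h2
    omega

/-- Let `R = ℚ[a,b]/⟨a^(m+1), b^(m+1), Σ_{i+j=m} a^i b^j⟩` with the `ℤ/2`-action `σ`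
swapping `a` and `b`.  Then: `R` has basis `{a^i b^j : 0 ≤ i ≤ m, 0 ≤ j ≤ m-1}`; the
invariant subspace `R⁺ = ker(σ - id)` has basis `{a^i b^j + a^j b^i : 0 ≤ i ≤ j ≤ m-1}`;
and the Poincaré series (with `a, b` of degree `2`) satisfy `P_R(z) = (1+z²) P_{R⁺}(z)`. -/
theorem stmt_3 (m : ℕ) (hm : 2 ≤ m)
    (σ : stmt3R m ≃ₐ[ℚ] stmt3R m)
    (hσa : σ (stmt3a m) = stmt3b m) (hσb : σ (stmt3b m) = stmt3a m) :
    (LinearIndependent ℚ (fun p : {p : ℕ × ℕ // p.1 ≤ m ∧ p.2 < m} =>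
        stmt3a m ^ p.1.1 * stmt3b m ^ p.1.2) ∧
      Submodule.span ℚ (Set.range fun p : {p : ℕ × ℕ // p.1 ≤ m ∧ p.2 < m} =>
        stmt3a m ^ p.1.1 * stmt3b m ^ p.1.2) = ⊤) ∧
    (LinearIndependent ℚ (fun p : {p : ℕ × ℕ // p.1 ≤ p.2 ∧ p.2 < m} =>
        stmt3a m ^ p.1.1 * stmt3b m ^ p.1.2 + stmt3a m ^ p.1.2 * stmt3b m ^ p.1.1) ∧
      Submodule.span ℚ (Set.range fun p : {p : ℕ × ℕ // p.1 ≤ p.2 ∧ p.2 < m} =>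
          stmt3a m ^ p.1.1 * stmt3b m ^ p.1.2 + stmt3a m ^ p.1.2 * stmt3b m ^ p.1.1) =
        LinearMap.ker (σ.toLinearMap - LinearMap.id)) ∧
    (PowerSeries.mk (fun d =>
        if 2 ∣ d then (Module.finrank ℚ ↥(stmt3Grade m (d / 2)) : ℤ) else 0) =
      (1 + PowerSeries.X ^ 2) * PowerSeries.mk (fun d =>
        if 2 ∣ d then
          (Module.finrank ℚ
            ↥(stmt3Grade m (d / 2) ⊓ LinearMap.ker (σ.toLinearMap - LinearMap.id)) : ℤ)
        else 0)) := by
  have hm0 : 0 < m := by omega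
  refine ⟨⟨stmt3_linInd m hm0, ?_⟩, ⟨stmt3_linInd_sym m hm0, ?_⟩, ?_⟩
  · rw [← stmt3_V_univ m, stmt3V]
    congr 1
    ext x
    constructor
    · rintro ⟨⟨p, hp⟩, rfl⟩
      exact ⟨p, ⟨hp.1, hp.2, trivial⟩, rfl⟩
    · rintro ⟨p, hp, rfl⟩
      exact ⟨⟨p, hp.1, hp.2.1⟩, rfl⟩
  · have h := stmt3_S_eq m Set.univ σ hσa hσb
    rw [stmt3_V_univ, top_inf_eq] at h
    rw [← h, stmt3S]
    congr 1
    ext x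
    constructor
    · rintro ⟨⟨p, hp⟩, rfl⟩
      exact ⟨p, ⟨hp.1, hp.2, trivial⟩, rfl⟩
    · rintro ⟨p, hp, rfl⟩
      exact ⟨⟨p, hp.1, hp.2.1⟩, rfl⟩
  · have hV : ∀ d, Module.finrank ℚ ↥(stmt3Grade m d) = (stmt3F m d).card := fun d => by
      rw [← stmt3_V_grade, stmt3_finrank_V m hm0]
    have hS : ∀ d, Module.finrank ℚ ↥(stmt3Grade m d ⊓
        LinearMap.ker (σ.toLinearMap - LinearMap.id)) = (stmt3G m d).card := fun d => by
      rw [← stmt3_V_grade, ← stmt3_S_eq m _ σ hσa hσb, stmt3_finrank_S m hm0]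
    simp only [hV, hS]
    ext n
    rw [add_mul, one_mul, map_add, PowerSeries.coeff_X_pow_mul']
    simp only [PowerSeries.coeff_mk]
    by_cases hn : 2 ∣ n
    · obtain ⟨d, rfl⟩ := hn
      cases d with
      | zero => simp [stmt3_card_zero]
      | succ d =>
        have h1 : 2 ≤ 2 * (d + 1) := by omega
        have h2 : 2 * (d + 1) - 2 = 2 * d := by omega
        simp [h1, h2, stmt3_card_succ]
    · have h1 : 2 ≤ n → ¬ 2 ∣ n - 2 := by omega
      by_cases h : 2 ≤ n
      · simp [hn, h1 h]
      · simp [hn, h]
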